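/- arXiv:2504.18146 — 4 statements merged into one kernel-verified Lean document; each statement's English description precedes it below -/
import Mathlib

section
/- Let V be a finite vertex type, G a simple graph on V, and x, a, b, c vertices with G.Adj x a, G.Adj a b, ¬G.Adj x b, ¬G.Adj a c, x ≠ b, x ≠ c, a ≠ c, and b ≠ c. If the graph G together with the added edge {x, b} has a perfect matching M1, and the graph G together with the added edge {a, c} has a perfect matching M2, then G itself has a perfect matching. -/
/-!
By Tutte's theorem it suffices to show that a Tutte violator `u` of `G` stays one after one of the
two edges is added. If `a ∈ u`, then deleting `u` also deletes the edge `{a, c}`. If `a ∉ u`, then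
the path `x, a, b` shows that `x` and `b`, unless one of them is deleted, already lie in the same
component of `G - u`, so the edge `{x, b}` does not change the components.
-/

namespace SimpleGraph

variable {V : Type*}

section Reachable

variable {G H : SimpleGraph V}

theorem reachable_sup_eq_left (h : H.Adj ≤ G.Reachable) : (G ⊔ H).Reachable = G.Reachable := by
  refine le_antisymm ?_ (Reachable.mono' le_sup_left)
  rintro v w ⟨p⟩
  induction p with
  | nil => exact .rfl
  | cons hadj _ ih => exact (hadj.elim Adj.reachable (h _ _)).trans ih

theorem image_supp_oddComponents :
    ConnectedComponent.supp '' G.oddComponents =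
      {s | Odd s.ncard ∧ ∃ v, {w | G.Reachable w v} = s} := by
  ext s
  constructor
  · rintro ⟨K, hK, rfl⟩
    induction K using ConnectedComponent.ind with
    | h v => exact ⟨hK, v, by ext w; simp⟩
  · rintro ⟨hs, v, rfl⟩
    have hsupp : (G.connectedComponentMk v).supp = {w | G.Reachable w v} := by ext w; simp
    exact ⟨G.connectedComponentMk v, by rwa [← hsupp] at hs, hsupp⟩

theorem ncard_oddComponents_congr (h : G.Reachable = H.Reachable) :
    G.oddComponents.ncard = H.oddComponents.ncard := by
  rw [← Set.ncard_image_of_injective _ ConnectedComponent.supp_injective,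
    ← Set.ncard_image_of_injective H.oddComponents ConnectedComponent.supp_injective,
    image_supp_oddComponents, image_supp_oddComponents, h]

end Reachable

section TutteViolator

variable {G H : SimpleGraph V} {u : Set V}

theorem isTutteViolator_iff_ncard_oddComponents_induce_compl :
    G.IsTutteViolator u ↔ u.ncard < (G.induce uᶜ).oddComponents.ncard := by
  rw [IsTutteViolator, Set.compl_eq_univ_sdiff, induce_eq_coe_induce_top]
  rfl

theorem isTutteViolator_sup_iff_left (h : (H.induce uᶜ).Adj ≤ (G.induce uᶜ).Reachable) :
    (G ⊔ H).IsTutteViolator u ↔ G.IsTutteViolator u := by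
  have hreach : ((G ⊔ H).induce uᶜ).Reachable = (G.induce uᶜ).Reachable := by
    rw [show (G ⊔ H).induce uᶜ = G.induce uᶜ ⊔ H.induce uᶜ from rfl, reachable_sup_eq_left h]
  rw [isTutteViolator_iff_ncard_oddComponents_induce_compl,
    isTutteViolator_iff_ncard_oddComponents_induce_compl, ncard_oddComponents_congr hreach]

theorem isTutteViolator_sup_iff_of_mem {a : V} (ha : a ∈ u)
    (hH : ∀ v w, H.Adj v w → v = a ∨ w = a) :
    (G ⊔ H).IsTutteViolator u ↔ G.IsTutteViolator u := by
  refine isTutteViolator_sup_iff_left ?_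
  rintro ⟨v, hv⟩ ⟨w, hw⟩ hvw
  obtain rfl | rfl := hH v w hvw
  exacts [absurd ha hv, absurd ha hw]

theorem isTutteViolator_sup_iff_of_notMem {a : V} (ha : a ∉ u)
    (hH : ∀ v w, H.Adj v w → G.Adj v a ∧ G.Adj a w) :
    (G ⊔ H).IsTutteViolator u ↔ G.IsTutteViolator u := by
  refine isTutteViolator_sup_iff_left fun v w hvw ↦ ?_
  have hva : (G.induce uᶜ).Adj v ⟨a, ha⟩ := (hH v w hvw).1
  have haw : (G.induce uᶜ).Adj ⟨a, ha⟩ w := (hH v w hvw).2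
  exact hva.reachable.trans haw.reachable

end TutteViolator

theorem exists_isPerfectMatching_of_near_matchings_general [Finite V] {G H₁ H₂ : SimpleGraph V}
    {a : V} {M₁ : (G ⊔ H₁).Subgraph} {M₂ : (G ⊔ H₂).Subgraph}
    (hH₁ : ∀ v w, H₁.Adj v w → G.Adj v a ∧ G.Adj a w)
    (hH₂ : ∀ v w, H₂.Adj v w → v = a ∨ w = a)
    (hM₁ : M₁.IsPerfectMatching) (hM₂ : M₂.IsPerfectMatching) :
    ∃ M : G.Subgraph, M.IsPerfectMatching := by
  refine tutte.mpr fun u hu ↦ ?_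
  by_cases ha : a ∈ u
  · exact not_isTutteViolator_of_isPerfectMatching hM₂ u
      ((isTutteViolator_sup_iff_of_mem ha hH₂).mpr hu)
  · exact not_isTutteViolator_of_isPerfectMatching hM₁ u
      ((isTutteViolator_sup_iff_of_notMem ha hH₁).mpr hu)

/-- If near-matchings exist for `G` plus edge `{x, b}` and for `G` plus edge `{a, c}`
(with the stated adjacency and distinctness conditions), then `G` has a perfect matching. -/
theorem exists_isPerfectMatching_of_near_matchings [Fintype V] {G : SimpleGraph V}
    {x a b c : V} {M1 : Subgraph (G ⊔ edge x b)} {M2 : Subgraph (G ⊔ edge a c)}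
    (hxa : G.Adj x a) (hab : G.Adj a b) (hnGxb : ¬G.Adj x b) (hnGac : ¬G.Adj a c)
    (hnxb : x ≠ b) (hnxc : x ≠ c) (hnac : a ≠ c) (hnbc : b ≠ c)
    (hM1 : M1.IsPerfectMatching) (hM2 : M2.IsPerfectMatching) :
    ∃ M : G.Subgraph, M.IsPerfectMatching :=
  exists_isPerfectMatching_of_near_matchings_general (a := a)
    (by grind [G.adj_comm]) (by grind) hM1 hM2

end SimpleGraph
end

section
/- Let G be a simple graph on a vertex type V, M a subgraph of G that is a perfect matching, and G' a simple graph on V that is alternating with respect to the spanning coercion of M and satisfies IsCycles. Then the top subgraph of the symmetric difference of the spanning coercion of M and G' is a perfect matching of that symmetric difference graph. -/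
/-!
At every vertex of an alternating cycle one of the two cycle edges lies in the other graph and one
does not. Hence toggling the edges of a union of alternating cycles preserves all vertex degrees,
and a perfect matching is precisely a subgraph in which every vertex has degree one.
-/

open scoped symmDiff

namespace SimpleGraph

variable {V : Type*}

theorem isPerfectMatching_iff_forall_encard_neighborSet {G : SimpleGraph V} {M : G.Subgraph} :
    M.IsPerfectMatching ↔ ∀ v, (M.neighborSet v).encard = 1 := by
  simp only [Subgraph.isPerfectMatching_iff, Set.encard_eq_one, Set.singleton_iff_unique_mem,
    Subgraph.mem_neighborSet]

theorem neighborSet_symmDiff (G H : SimpleGraph V) (v : V) :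
    (G ∆ H).neighborSet v = G.neighborSet v ∆ H.neighborSet v :=
  rfl

section IsAlternating

variable {C H : SimpleGraph V}

theorem encard_neighborSet_sdiff_eq_encard_inter_of_isAlternating (halt : C.IsAlternating H)
    (hcyc : C.IsCycles) (v : V) :
    (C.neighborSet v \ H.neighborSet v).encard = (C.neighborSet v ∩ H.neighborSet v).encard := by
  obtain hempty | hne := (C.neighborSet v).eq_empty_or_nonempty
  · rw [hempty, Set.empty_sdiff, Set.empty_inter]
  obtain ⟨a, b, hab, hN⟩ := Set.ncard_eq_two.mp (hcyc hne)
  have hHab : a ∈ H.neighborSet v ↔ b ∉ H.neighborSet v :=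
    halt hab (by simp [← mem_neighborSet, hN]) (by simp [← mem_neighborSet, hN])
  wlog ha : a ∈ H.neighborSet v generalizing a b
  · exact this b a hab.symm (hN.trans (Set.pair_comm a b)) (by tauto) (by tauto)
  have hb : b ∉ H.neighborSet v := hHab.mp ha
  have hsdiff : C.neighborSet v \ H.neighborSet v = {b} := by
    rw [hN, Set.insert_sdiff_of_mem _ ha,
      sdiff_eq_left.mpr (Set.disjoint_singleton_left.mpr hb)]
  have hinter : C.neighborSet v ∩ H.neighborSet v = {a} := by
    rw [hN, Set.insert_inter_of_mem ha, Set.singleton_inter_eq_empty.mpr hb, insert_empty_eq]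
  rw [hsdiff, hinter, Set.encard_singleton, Set.encard_singleton]

theorem encard_neighborSet_symmDiff_of_isAlternating (halt : C.IsAlternating H)
    (hcyc : C.IsCycles) (v : V) :
    ((H ∆ C).neighborSet v).encard = (H.neighborSet v).encard :=
  calc ((H ∆ C).neighborSet v).encard
    _ = (H.neighborSet v \ C.neighborSet v ∪ C.neighborSet v \ H.neighborSet v).encard := by
      rw [neighborSet_symmDiff, Set.symmDiff_def]
    _ = (H.neighborSet v \ C.neighborSet v).encard
        + (C.neighborSet v \ H.neighborSet v).encard :=
      Set.encard_union_eq disjoint_sdiff_sdiff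
    _ = (H.neighborSet v \ C.neighborSet v).encard
        + (H.neighborSet v ∩ C.neighborSet v).encard := by
      rw [encard_neighborSet_sdiff_eq_encard_inter_of_isAlternating halt hcyc, Set.inter_comm]
    _ = (H.neighborSet v).encard := Set.encard_sdiff_add_encard_inter _ _

end IsAlternating

/-- Taking the symmetric difference of a perfect matching with an alternating
graph consisting of cycles yields a perfect matching. -/
theorem IsPerfectMatching.symmDiff_of_isAlternating {G G' : SimpleGraph V} {M : G.Subgraph}
    (hM : M.IsPerfectMatching) (hG' : G'.IsAlternating M.spanningCoe) (hG'cyc : G'.IsCycles) :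
    (⊤ : Subgraph (M.spanningCoe ∆ G')).IsPerfectMatching := by
  rw [isPerfectMatching_iff_forall_encard_neighborSet] at hM ⊢
  exact fun v ↦ (encard_neighborSet_symmDiff_of_isAlternating hG' hG'cyc v).trans (hM v)

end SimpleGraph
end

section
/- Let G be a simple graph on a vertex type V, M a subgraph of G that is a perfect matching, and U ⊆ V a set of vertices. For every connected component C of the graph obtained from G by deleting U whose vertex set has odd cardinality, there exist a vertex v in C and a vertex w in U such that M.Adj v w. -/
/-!
If no edge of `M` leaves a set `s` of matched vertices, then `M` restricts to a matching of `s`, so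
`s` has even cardinality or is infinite. Hence an edge of `M` leaves every odd component `C` of `G`
minus `u`; its far end cannot be a surviving vertex, as it would then lie in `C`.
-/

namespace SimpleGraph

variable {V : Type*}

section

variable {G : SimpleGraph V} {M : G.Subgraph} {s u : Set V}

lemma isMatching_induce_of_forall_adj_mem (hM : M.IsMatching) (hs : s ⊆ M.verts)
    (h : ∀ v ∈ s, ∀ w, M.Adj v w → w ∈ s) : (M.induce s).IsMatching := by
  intro v hv
  obtain ⟨w, hvw, hw⟩ := hM (hs hv)
  exact ⟨w, ⟨hv, h v hv w hvw, hvw⟩, fun y hy ↦ hw y hy.2.2⟩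

-- An infinite matching is covered by the convention `Set.ncard s = 0` for infinite `s`.
lemma even_ncard_verts_of_isMatching (hM : M.IsMatching) : Even M.verts.ncard := by
  obtain hfin | hinf := M.verts.finite_or_infinite
  · have := hfin.fintype
    simpa only [Set.ncard_eq_toFinset_card'] using hM.even_card
  · simp [hinf.ncard]

lemma exists_adj_notMem_of_odd_ncard (hM : M.IsMatching) (hs : s ⊆ M.verts)
    (hodd : Odd s.ncard) : ∃ v ∈ s, ∃ w ∉ s, M.Adj v w := by
  by_contra! hclosed
  have hmatch : (M.induce s).IsMatching :=
    isMatching_induce_of_forall_adj_mem hM hs fun v hv w ↦ not_imp_not.1 (hclosed v hv w)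
  exact Nat.not_even_iff_odd.2 hodd (even_ncard_verts_of_isMatching hmatch)

lemma mem_of_adj_of_notMem_supp
    {C : ((⊤ : G.Subgraph).deleteVerts u).coe.ConnectedComponent} {v w : V}
    (hv : v ∈ Subtype.val '' C.supp) (hw : w ∉ Subtype.val '' C.supp) (hvw : G.Adj v w) :
    w ∈ u := by
  by_contra hwu
  have hvu : v ∉ u := by
    obtain ⟨x, -, rfl⟩ := hv
    exact x.2.2
  have hadj : ((⊤ : G.Subgraph).deleteVerts u).Adj v w :=
    Subgraph.deleteVerts_adj.2 ⟨trivial, hvu, trivial, hwu, hvw⟩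
  exact hw (ConnectedComponent.mem_coe_supp_of_adj hv hadj.snd_mem hadj)

theorem exists_adj_mem_of_odd_component_general (hM : M.IsMatching)
    (C : ((⊤ : G.Subgraph).deleteVerts u).coe.ConnectedComponent)
    (hCM : Subtype.val '' C.supp ⊆ M.verts) (hC : Odd C.supp.ncard) :
    ∃ v ∈ C.supp, ∃ w ∈ u, M.Adj v w := by
  rw [← Set.ncard_image_of_injective _ Subtype.val_injective] at hC
  obtain ⟨_, ⟨v, hv, rfl⟩, w, hw, hvw⟩ := exists_adj_notMem_of_odd_ncard hM hCM hC
  exact ⟨v, hv, w, mem_of_adj_of_notMem_supp ⟨v, hv, rfl⟩ hw hvw.adj_sub, hvw⟩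

end

/-- Given a perfect matching of `G` and a vertex set `u`, every odd component of `G`
minus `u` contains a vertex matched to a vertex of `u`. -/
theorem exists_adj_mem_of_odd_component {G : SimpleGraph V} {M : G.Subgraph}
    (hM : M.IsPerfectMatching) (u : Set V)
    (C : ((⊤ : G.Subgraph).deleteVerts u).coe.ConnectedComponent)
    (hC : Odd C.supp.ncard) :
    ∃ v ∈ C.supp, ∃ w ∈ u, M.Adj v w :=
  exists_adj_mem_of_odd_component_general hM.1 C (fun v _ ↦ hM.2 v) hC

end SimpleGraph
end

section
/- Let V be a vertex type, G1 and G2 simple graphs on V, M1 a subgraph of G1 that is a perfect matching, and M2 a subgraph of G2 that is a perfect matching. Then the symmetric difference of the spanning coercions of M1 and M2 is alternating with respect to the spanning coercion of M2. -/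
open scoped symmDiff

namespace SimpleGraph

variable {V : Type*}

theorem symmDiff_adj {G H : SimpleGraph V} {v w : V} :
    (G ∆ H).Adj v w ↔ Xor (G.Adj v w) (H.Adj v w) :=
  Iff.rfl

theorem symmDiff_spanningCoe_isAlternating_general {G1 G2 : SimpleGraph V}
    {M1 : G1.Subgraph} {M2 : G2.Subgraph} (hM1 : M1.IsMatching) (hM2 : M2.IsMatching) :
    (M1.spanningCoe ∆ M2.spanningCoe).IsAlternating M2.spanningCoe := by
  intro v w w' hne hw hw'
  simp only [symmDiff_adj, Subgraph.spanningCoe_adj] at hw hw' ⊢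
  constructor
  · exact hM2.not_adj_left_of_ne hne
  · intro hM2w'
    have hM1w' : M1.Adj v w' := hw'.or.resolve_right hM2w'
    have hM1w : ¬M1.Adj v w := hM1.not_adj_left_of_ne hne.symm hM1w'
    exact hw.or.resolve_left hM1w

/-- The symmetric difference of two perfect matchings is alternating with respect to
the second matching. -/
theorem symmDiff_spanningCoe_isAlternating {G1 G2 : SimpleGraph V}
    {M1 : G1.Subgraph} {M2 : G2.Subgraph} (hM1 : M1.IsPerfectMatching)
    (hM2 : M2.IsPerfectMatching) :
    (M1.spanningCoe ∆ M2.spanningCoe).IsAlternating M2.spanningCoe :=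
  symmDiff_spanningCoe_isAlternating_general hM1.1 hM2.1

end SimpleGraph
end
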